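/- With notation as in the context, for every k ≥ 2 and every degree-k cochain triple φ = (φ^{k0}, φ^{(k−1)1}, φ^{(k−2)2}) of the dimensionally reduced Čech complex with integer coefficients, one has D_F(D_F(φ)) = 0; that is, each of the three components of D_F applied to D_F(φ) vanishes pointwise on the relevant intersections of the cover. -/

import Mathlib

/-!
`D_F² = 0` comes down to three identities for the products with `F`, where `F` is a cocycle:

* `δ̌(φ¹ ∪₁ F) = δ̌φ¹ ∪₁ F` (`cechD_cup1v`) and `δ̌(φ² ∪₁ F) = δ̌φ² ∪₁ F` (`cechD_cup1m`), the Leibniz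
  rule with the term containing `δ̌F` dropped;
* `δ̌(φ² ∪₂ C(F)) = δ̌φ² ∪₂ C(F) + (-1)^{k-2} (φ² ∪₁ F) ∪₁ F` (`cechD_cup2`), the Leibniz rule
  together with `δ̌C(F)_{ij} = F_i ∪ F_j - F_j ∪ F_i` (`cech_CFc`): up to sign, `C(F)_{ij}` is
  Steenrod's cup-one product of `F_i` and `F_j`, which measures the failure of the cup product to
  be graded commutative.

With `δ̌² = 0` the remaining terms of `D_F²` cancel in pairs.

Both `δ̌² = 0` and the Leibniz rules are proved by induction on the degree, splitting off the
first index: `(δ̌φ)(λ₀, μ) = φ(μ) - (δ̌ φ(λ₀, ·))(μ)` (`cechD_succ`).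
-/

open Finset

variable {Z I : Type*}

/-- The Čech coboundary of a cochain (on tuples of length `m+1`) with values in an
abelian group. -/
def cechD {Z I : Type*} {M : Type*} [AddCommGroup M] {m : ℕ}
    (φ : (Fin (m + 1) → I) → Z → M) : (Fin (m + 2) → I) → Z → M :=
  fun lam z => ∑ i : Fin (m + 2), ((-1 : ℤ) ^ (i : ℕ)) • φ (fun j => lam (i.succAbove j)) z

/-- The product `φ ∪₁ F` of a `ℤⁿ`-valued cochain `φ` (on tuples `λ₀…λ_{k-1}` of length
`m+1 = k`) with the `ℤⁿ`-valued 2-cochain `F`: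
`(φ ∪₁ F)_{λ₀…λ_{k+1}}(z) = Σ_l φ_{λ₀…λ_{k-1}}(z)_l · F_{λ_{k-1}λ_kλ_{k+1}}(z)_l`. -/
def cup1v {Z I : Type*} {n : ℕ} (F : I → I → I → Z → Fin n → ℤ) {m : ℕ}
    (φ : (Fin (m + 1) → I) → Z → Fin n → ℤ) : (Fin (m + 3) → I) → Z → ℤ :=
  fun lam z => ∑ l : Fin n,
    φ (fun i => lam (Fin.castLE (by omega) i)) z l *
      F (lam ⟨m, by omega⟩) (lam ⟨m + 1, by omega⟩) (lam ⟨m + 2, by omega⟩) z l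

/-- The product `φ ∪₁ F` of a strictly-upper-triangular-matrix valued cochain `φ`
(on tuples of length `m+1`) with `F`:
`(φ ∪₁ F)_{λ₀…λ_k}(z)_l = Σ_{i<j} φ_{λ₀…λ_{k-2}}(z)_{ij}·(F_{λ_{k-2}λ_{k-1}λ_k}(z)_i δ_{jl}
− δ_{il} F_{λ_{k-2}λ_{k-1}λ_k}(z)_j)`. -/
def cup1m {Z I : Type*} {n : ℕ} (F : I → I → I → Z → Fin n → ℤ) {m : ℕ}
    (φ : (Fin (m + 1) → I) → Z → Fin n → Fin n → ℤ) :
    (Fin (m + 3) → I) → Z → Fin n → ℤ :=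
  fun lam z l => ∑ i : Fin n, ∑ j : Fin n,
    if i < j then
      φ (fun t => lam (Fin.castLE (by omega) t)) z i j *
        (F (lam ⟨m, by omega⟩) (lam ⟨m + 1, by omega⟩) (lam ⟨m + 2, by omega⟩) z i *
            (if j = l then 1 else 0) -
          (if i = l then 1 else 0) *
            F (lam ⟨m, by omega⟩) (lam ⟨m + 1, by omega⟩) (lam ⟨m + 2, by omega⟩) z j)
    else 0

/-- The 3-cochain `C(F)_{abcd}(z)_{ij} = F_{abc}(z)_i·F_{acd}(z)_j − F_{bcd}(z)_i·F_{abd}(z)_j`. -/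
def CFc {Z I : Type*} {n : ℕ} (F : I → I → I → Z → Fin n → ℤ) (a b c d : I) (z : Z)
    (i j : Fin n) : ℤ :=
  F a b c z i * F a c d z j - F b c d z i * F a b d z j

/-- The product `φ ∪₂ C(F)` of a matrix-valued cochain `φ` (on tuples of length `m+1`)
with the 3-cochain `C(F)`. -/
def cup2 {Z I : Type*} {n : ℕ} (F : I → I → I → Z → Fin n → ℤ) {m : ℕ}
    (φ : (Fin (m + 1) → I) → Z → Fin n → Fin n → ℤ) : (Fin (m + 4) → I) → Z → ℤ :=
  fun lam z => ∑ i : Fin n, ∑ j : Fin n,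
    if i < j then
      φ (fun t => lam (Fin.castLE (by omega) t)) z i j *
        CFc F (lam ⟨m, by omega⟩) (lam ⟨m + 1, by omega⟩) (lam ⟨m + 2, by omega⟩)
          (lam ⟨m + 3, by omega⟩) z i j
    else 0

/-- First component of the dimensionally reduced differential `D_F` in degree `k = m+2`:
`δ̌φ⁰ + (−1)^{k+1} φ¹∪₁F + (−1)^{k+1} φ²∪₂C(F)`. -/
def DF0 {Z I : Type*} {n : ℕ} (F : I → I → I → Z → Fin n → ℤ) {m : ℕ}
    (φ0 : (Fin (m + 3) → I) → Z → ℤ) (φ1 : (Fin (m + 2) → I) → Z → Fin n → ℤ)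
    (φ2 : (Fin (m + 1) → I) → Z → Fin n → Fin n → ℤ) : (Fin (m + 4) → I) → Z → ℤ :=
  fun lam z => cechD φ0 lam z + (-1 : ℤ) ^ (m + 3) * cup1v F φ1 lam z +
    (-1 : ℤ) ^ (m + 3) * cup2 F φ2 lam z

/-- Second component of `D_F` in degree `k = m+2`: `δ̌φ¹ + (−1)^k φ²∪₁F`. -/
def DF1 {Z I : Type*} {n : ℕ} (F : I → I → I → Z → Fin n → ℤ) {m : ℕ}
    (φ1 : (Fin (m + 2) → I) → Z → Fin n → ℤ)
    (φ2 : (Fin (m + 1) → I) → Z → Fin n → Fin n → ℤ) :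
    (Fin (m + 3) → I) → Z → Fin n → ℤ :=
  fun lam z l => cechD φ1 lam z l + (-1 : ℤ) ^ (m + 2) * cup1m F φ2 lam z l

/-- Third component of `D_F`: `δ̌φ²`. -/
def DF2 {Z I : Type*} {n : ℕ} {m : ℕ}
    (φ2 : (Fin (m + 1) → I) → Z → Fin n → Fin n → ℤ) :
    (Fin (m + 2) → I) → Z → Fin n → Fin n → ℤ :=
  cechD φ2

/-- A 0-cochain is a function of its single index. -/
lemma cochain_zero {Z I M : Type*} (φ : (Fin 1 → I) → Z → M) :
    ∃ χ : I → Z → M, φ = fun t => χ (t 0) :=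
  ⟨fun a => φ fun _ => a, funext fun t => congrArg φ <| funext fun i => by
    rw [Subsingleton.elim i 0]⟩

/-- Splitting off the first index: `(δ̌φ)(λ₀, μ) = φ(μ) - (δ̌ φ(λ₀, ·))(μ)`. -/
lemma cechD_succ {Z I M : Type*} [AddCommGroup M] {m : ℕ}
    (φ : (Fin (m + 2) → I) → Z → M) (lam : Fin (m + 3) → I) (z : Z) :
    cechD φ lam z = φ (fun j => lam j.succ) z -
      cechD (fun t : Fin (m + 1) → I => φ (Fin.cons (lam 0) t)) (fun j => lam j.succ) z := by
  unfold cechD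
  rw [Fin.sum_univ_succ, sub_eq_add_neg, ← Finset.sum_neg_distrib]
  congr 1
  · simp
  · refine Finset.sum_congr rfl fun i _ => ?_
    have h : (fun j => lam (i.succ.succAbove j)) =
        Fin.cons (lam 0) (fun j => lam (i.succAbove j).succ) := by
      funext j
      refine Fin.cases ?_ (fun j => ?_) j <;> simp
    rw [h, Fin.val_succ, pow_succ]
    simp

lemma cechD_sub {Z I M : Type*} [AddCommGroup M] {m : ℕ}
    (φ ψ : (Fin (m + 1) → I) → Z → M) (lam : Fin (m + 2) → I) (z : Z) :
    cechD (fun t z => φ t z - ψ t z) lam z = cechD φ lam z - cechD ψ lam z := by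
  simp [cechD, smul_sub, Finset.sum_sub_distrib]

lemma cechD_add {Z I M : Type*} [AddCommGroup M] {m : ℕ}
    (φ ψ : (Fin (m + 1) → I) → Z → M) (lam : Fin (m + 2) → I) (z : Z) :
    cechD (fun t z => φ t z + ψ t z) lam z = cechD φ lam z + cechD ψ lam z := by
  simp [cechD, smul_add, Finset.sum_add_distrib]

lemma cechD_mul_left {Z I : Type*} {m : ℕ} (c : ℤ)
    (φ : (Fin (m + 1) → I) → Z → ℤ) (lam : Fin (m + 2) → I) (z : Z) :
    cechD (fun t z => c * φ t z) lam z = c * cechD φ lam z := by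
  simp only [cechD, smul_eq_mul, Finset.mul_sum]
  exact Finset.sum_congr rfl fun i _ => by ring

lemma cechD_sum {Z I ι : Type*} [Fintype ι] {m : ℕ}
    (φ : ι → (Fin (m + 1) → I) → Z → ℤ) (lam : Fin (m + 2) → I) (z : Z) :
    cechD (fun t z => ∑ l, φ l t z) lam z = ∑ l, cechD (φ l) lam z := by
  simp only [cechD, Finset.smul_sum]
  exact Finset.sum_comm

lemma cechD_ite {Z I : Type*} (p : Prop) [Decidable p] {m : ℕ}
    (φ : (Fin (m + 1) → I) → Z → ℤ) (lam : Fin (m + 2) → I) (z : Z) :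
    cechD (fun t z => if p then φ t z else 0) lam z = if p then cechD φ lam z else 0 := by
  split_ifs <;> simp [cechD]

lemma cechD_apply {Z I ι : Type*} {M : ι → Type*} [∀ i, AddCommGroup (M i)] {m : ℕ}
    (φ : (Fin (m + 1) → I) → Z → ∀ i, M i) (lam : Fin (m + 2) → I) (z : Z) (l : ι) :
    cechD φ lam z l = cechD (fun t z => φ t z l) lam z := by
  simp [cechD, Finset.sum_apply]

/-- `δ̌² = 0`. -/
lemma cechD_cechD {Z I M : Type*} [AddCommGroup M] {m : ℕ}
    (φ : (Fin (m + 1) → I) → Z → M) (lam : Fin (m + 3) → I) (z : Z) :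
    cechD (cechD φ) lam z = 0 := by
  induction m with
  | zero =>
    -- `cechD_succ` needs a cochain of positive degree, so in degree 0 the six terms are
    -- written out.
    obtain ⟨χ, rfl⟩ : ∃ χ : I → Z → M, φ = fun t => χ (t 0) :=
      cochain_zero φ
    simp [cechD, Fin.sum_univ_succ, Fin.succAbove]
    abel
  | succ m ih =>
    have h : (fun t : Fin (m + 2) → I => cechD φ (Fin.cons (lam 0) t)) =
        fun t z => φ t z - cechD (fun t : Fin (m + 1) → I => φ (Fin.cons (lam 0) t)) t z := by
      funext t z
      rw [cechD_succ]
      simp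
    rw [cechD_succ, h, cechD_sub, ih]
    simp

/-- Leibniz rule for the cup product of a scalar cochain with a scalar 2-cochain `G`. -/
lemma cechD_cup_two {Z I : Type*} {m : ℕ} (G : I → I → I → Z → ℤ)
    (ψ : (Fin (m + 1) → I) → Z → ℤ) (lam : Fin (m + 4) → I) (z : Z) :
    cechD (fun (t : Fin (m + 3) → I) z => ψ (fun i => t (Fin.castLE (by omega) i)) z *
        G (t ⟨m, by omega⟩) (t ⟨m + 1, by omega⟩) (t ⟨m + 2, by omega⟩) z) lam z =
      cechD ψ (fun i => lam (Fin.castLE (by omega) i)) z *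
        G (lam ⟨m + 1, by omega⟩) (lam ⟨m + 2, by omega⟩) (lam ⟨m + 3, by omega⟩) z +
      (-1) ^ m * (ψ (fun i => lam (Fin.castLE (by omega) i)) z *
        (G (lam ⟨m + 1, by omega⟩) (lam ⟨m + 2, by omega⟩) (lam ⟨m + 3, by omega⟩) z -
         G (lam ⟨m, by omega⟩) (lam ⟨m + 2, by omega⟩) (lam ⟨m + 3, by omega⟩) z +
         G (lam ⟨m, by omega⟩) (lam ⟨m + 1, by omega⟩) (lam ⟨m + 3, by omega⟩) z -
         G (lam ⟨m, by omega⟩) (lam ⟨m + 1, by omega⟩) (lam ⟨m + 2, by omega⟩) z)) := by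
  induction m with
  | zero =>
    obtain ⟨χ, rfl⟩ : ∃ χ : I → Z → ℤ, ψ = fun t => χ (t 0) :=
      cochain_zero ψ
    simp [cechD, Fin.sum_univ_succ, Fin.succAbove]
    ring
  | succ m ih =>
    -- Taking the front face of a tuple commutes with prepending the first index.
    have hc (t : Fin (m + 3) → I) :
        (fun i : Fin (m + 2) => (Fin.cons (lam 0) t : Fin (m + 4) → I) (Fin.castLE (by omega) i)) =
          Fin.cons (lam 0) (fun i : Fin (m + 1) => t (Fin.castLE (by omega) i)) := by
      funext i
      refine Fin.cases rfl (fun i => rfl) i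
    have h0 : (fun i : Fin (m + 2) => lam (Fin.castLE (by omega) i)) =
          Fin.cons (lam 0) (fun i : Fin (m + 1) => lam (Fin.castLE (by omega) i).succ) := by
      funext i
      refine Fin.cases rfl (fun i => rfl) i
    rw [cechD_succ, cechD_succ ψ]
    simp only [hc]
    have := ih (fun t => ψ (Fin.cons (lam 0) t)) (fun j => lam j.succ)
    refine (congrArg₂ (· - ·) rfl this).trans ?_
    rw [h0, pow_succ]
    simp only [Fin.succ_mk, Fin.castLE_succ, Fin.castLE_zero]
    ring

/-- Leibniz rule for the cup product of a scalar cochain with a scalar 3-cochain `G`. -/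
lemma cechD_cup_three {Z I : Type*} {m : ℕ} (G : I → I → I → I → Z → ℤ)
    (ψ : (Fin (m + 1) → I) → Z → ℤ) (lam : Fin (m + 5) → I) (z : Z) :
    cechD (fun (t : Fin (m + 4) → I) z => ψ (fun i => t (Fin.castLE (by omega) i)) z *
        G (t ⟨m, by omega⟩) (t ⟨m + 1, by omega⟩) (t ⟨m + 2, by omega⟩)
          (t ⟨m + 3, by omega⟩) z) lam z =
      cechD ψ (fun i => lam (Fin.castLE (by omega) i)) z *
        G (lam ⟨m + 1, by omega⟩) (lam ⟨m + 2, by omega⟩)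
          (lam ⟨m + 3, by omega⟩) (lam ⟨m + 4, by omega⟩) z +
      (-1) ^ m * (ψ (fun i => lam (Fin.castLE (by omega) i)) z *
        (G (lam ⟨m + 1, by omega⟩) (lam ⟨m + 2, by omega⟩)
            (lam ⟨m + 3, by omega⟩) (lam ⟨m + 4, by omega⟩) z -
         G (lam ⟨m, by omega⟩) (lam ⟨m + 2, by omega⟩)
            (lam ⟨m + 3, by omega⟩) (lam ⟨m + 4, by omega⟩) z +
         G (lam ⟨m, by omega⟩) (lam ⟨m + 1, by omega⟩)
            (lam ⟨m + 3, by omega⟩) (lam ⟨m + 4, by omega⟩) z -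
         G (lam ⟨m, by omega⟩) (lam ⟨m + 1, by omega⟩)
            (lam ⟨m + 2, by omega⟩) (lam ⟨m + 4, by omega⟩) z +
         G (lam ⟨m, by omega⟩) (lam ⟨m + 1, by omega⟩)
            (lam ⟨m + 2, by omega⟩) (lam ⟨m + 3, by omega⟩) z)) := by
  induction m with
  | zero =>
    obtain ⟨χ, rfl⟩ : ∃ χ : I → Z → ℤ, ψ = fun t => χ (t 0) :=
      cochain_zero ψ
    simp [cechD, Fin.sum_univ_succ, Fin.succAbove]
    ring
  | succ m ih =>
    -- Taking the front face of a tuple commutes with prepending the first index.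
    have hc (t : Fin (m + 4) → I) :
        (fun i : Fin (m + 2) => (Fin.cons (lam 0) t : Fin (m + 5) → I) (Fin.castLE (by omega) i)) =
          Fin.cons (lam 0) (fun i : Fin (m + 1) => t (Fin.castLE (by omega) i)) := by
      funext i
      refine Fin.cases rfl (fun i => rfl) i
    have h0 : (fun i : Fin (m + 2) => lam (Fin.castLE (by omega) i)) =
          Fin.cons (lam 0) (fun i : Fin (m + 1) => lam (Fin.castLE (by omega) i).succ) := by
      funext i
      refine Fin.cases rfl (fun i => rfl) i
    rw [cechD_succ, cechD_succ ψ]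
    simp only [hc]
    have := ih (fun t => ψ (Fin.cons (lam 0) t)) (fun j => lam j.succ)
    refine (congrArg₂ (· - ·) rfl this).trans ?_
    rw [h0, pow_succ]
    simp only [Fin.succ_mk, Fin.castLE_succ, Fin.castLE_zero]
    ring

/-- If `δ̌F = 0` on the last four indices, then `δ̌(φ ∪₁ F) = δ̌φ ∪₁ F`. -/
lemma cechD_cup1v {Z I : Type*} {n m : ℕ} (F : I → I → I → Z → Fin n → ℤ)
    (φ : (Fin (m + 1) → I) → Z → Fin n → ℤ) (lam : Fin (m + 4) → I) (z : Z)
    (h : F (lam ⟨m + 1, by omega⟩) (lam ⟨m + 2, by omega⟩) (lam ⟨m + 3, by omega⟩) z -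
      F (lam ⟨m, by omega⟩) (lam ⟨m + 2, by omega⟩) (lam ⟨m + 3, by omega⟩) z +
      F (lam ⟨m, by omega⟩) (lam ⟨m + 1, by omega⟩) (lam ⟨m + 3, by omega⟩) z -
      F (lam ⟨m, by omega⟩) (lam ⟨m + 1, by omega⟩) (lam ⟨m + 2, by omega⟩) z = 0) :
    cechD (cup1v F φ) lam z = cup1v F (cechD φ) lam z := by
  refine (cechD_sum _ _ _).trans (Finset.sum_congr rfl fun l _ =>
    (cechD_cup_two (fun a b c z => F a b c z l) (fun t z => φ t z l) lam z).trans ?_)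
  have hl := congrFun h l
  simp only [Pi.add_apply, Pi.sub_apply, Pi.zero_apply] at hl
  rw [hl, cechD_apply]
  simp

/-- The Čech coboundary of a sum over pairs `i < j`. -/
lemma cechD_sum_lt {Z I : Type*} {n m : ℕ}
    (φ : Fin n → Fin n → (Fin (m + 1) → I) → Z → ℤ) (lam : Fin (m + 2) → I) (z : Z) :
    cechD (fun t z => ∑ i, ∑ j, if i < j then φ i j t z else 0) lam z =
      ∑ i, ∑ j, if i < j then cechD (φ i j) lam z else 0 := by
  rw [cechD_sum]
  refine Finset.sum_congr rfl fun i _ => ?_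
  rw [cechD_sum]
  exact Finset.sum_congr rfl fun j _ => cechD_ite _ _ _ _

/-- If `δ̌F = 0` on the last four indices, then `δ̌(φ ∪₁ F) = δ̌φ ∪₁ F`. -/
lemma cechD_cup1m {Z I : Type*} {n m : ℕ} (F : I → I → I → Z → Fin n → ℤ)
    (φ : (Fin (m + 1) → I) → Z → Fin n → Fin n → ℤ) (lam : Fin (m + 4) → I) (z : Z)
    (h : F (lam ⟨m + 1, by omega⟩) (lam ⟨m + 2, by omega⟩) (lam ⟨m + 3, by omega⟩) z -
      F (lam ⟨m, by omega⟩) (lam ⟨m + 2, by omega⟩) (lam ⟨m + 3, by omega⟩) z +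
      F (lam ⟨m, by omega⟩) (lam ⟨m + 1, by omega⟩) (lam ⟨m + 3, by omega⟩) z -
      F (lam ⟨m, by omega⟩) (lam ⟨m + 1, by omega⟩) (lam ⟨m + 2, by omega⟩) z = 0) (l : Fin n) :
    cechD (cup1m F φ) lam z l = cup1m F (cechD φ) lam z l := by
  rw [cechD_apply]
  refine (cechD_sum_lt _ _ _).trans (Finset.sum_congr rfl fun i _ =>
    Finset.sum_congr rfl fun j _ => if_congr Iff.rfl ?_ rfl)
  refine (cechD_cup_two (fun a b c z => F a b c z i * (if j = l then 1 else 0) -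
    (if i = l then 1 else 0) * F a b c z j) (fun t z => φ t z i j) lam z).trans ?_
  have hi := congrFun h i
  have hj := congrFun h j
  simp only [Pi.add_apply, Pi.sub_apply, Pi.zero_apply] at hi hj
  rw [cechD_apply, cechD_apply]
  linear_combination (-1) ^ m * φ (fun i => lam (Fin.castLE (by omega) i)) z i j *
    ((if j = l then 1 else 0) * hi - (if i = l then 1 else 0) * hj)

/-- `δ̌C(F)_{ij} = F_i ∪ F_j - F_j ∪ F_i`: the cochain `C(F)` is the homotopy expressing
graded commutativity of the cup product of the cocycles `F_i` and `F_j`. -/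
lemma cech_CFc {Z I : Type*} {n : ℕ} (F : I → I → I → Z → Fin n → ℤ) (z : Z) (W : I → Set Z)
    (hF : ∀ a b c d : I, z ∈ W a → z ∈ W b → z ∈ W c → z ∈ W d →
      F b c d z - F a c d z + F a b d z - F a b c z = 0)
    {a b c d e : I} (ha : z ∈ W a) (hb : z ∈ W b) (hc : z ∈ W c) (hd : z ∈ W d) (he : z ∈ W e)
    (i j : Fin n) :
    CFc F b c d e z i j - CFc F a c d e z i j + CFc F a b d e z i j - CFc F a b c e z i j +
      CFc F a b c d z i j = F a b c z i * F c d e z j - F a b c z j * F c d e z i := by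
  -- The cocycle condition expresses every value of `F` through those having first index `a`.
  have key {p q r : I} (hp : z ∈ W p) (hq : z ∈ W q) (hr : z ∈ W r) (l : Fin n) :
      F p q r z l = F a q r z l - F a p r z l + F a p q z l := by
    have := congrFun (hF a p q r ha hp hq hr) l
    simp only [Pi.add_apply, Pi.sub_apply, Pi.zero_apply] at this
    linarith
  simp only [CFc]
  rw [key hb hc hd i, key hb hc he i, key hb hd he i, key hc hd he i,
    key hb hc he j, key hb hd he j, key hc hd he j]
  ring

/-- `(φ ∪₁ F) ∪₁ F` pairs `φ_{ij}` with `F_i ∪ F_j - F_j ∪ F_i`. -/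
lemma cup1v_cup1m {Z I : Type*} {n m : ℕ} (F : I → I → I → Z → Fin n → ℤ)
    (φ : (Fin (m + 1) → I) → Z → Fin n → Fin n → ℤ) (lam : Fin (m + 5) → I) (z : Z) :
    cup1v F (cup1m F φ) lam z = ∑ i, ∑ j, if i < j then
      φ (fun t => lam (Fin.castLE (by omega) t)) z i j *
        (F (lam ⟨m, by omega⟩) (lam ⟨m + 1, by omega⟩) (lam ⟨m + 2, by omega⟩) z i *
            F (lam ⟨m + 2, by omega⟩) (lam ⟨m + 3, by omega⟩) (lam ⟨m + 4, by omega⟩) z j -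
          F (lam ⟨m, by omega⟩) (lam ⟨m + 1, by omega⟩) (lam ⟨m + 2, by omega⟩) z j *
            F (lam ⟨m + 2, by omega⟩) (lam ⟨m + 3, by omega⟩) (lam ⟨m + 4, by omega⟩) z i)
      else 0 := by
  simp only [cup1v, cup1m, Finset.sum_mul]
  rw [Finset.sum_comm]
  refine Finset.sum_congr rfl fun i _ => ?_
  rw [Finset.sum_comm]
  refine Finset.sum_congr rfl fun j _ => ?_
  split_ifs with hij
  · simp only [mul_sub, sub_mul, Finset.sum_sub_distrib, mul_ite, ite_mul, mul_one, one_mul,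
      mul_zero, zero_mul, Finset.sum_ite_eq, Finset.mem_univ, if_true]
    simp only [Fin.castLE_mk, Fin.castLE_castLE, mul_assoc]
  · simp

/-- The Leibniz rule for `φ ∪₂ C(F)`; the contribution of `δ̌C(F)` is `(φ ∪₁ F) ∪₁ F`. -/
lemma cechD_cup2 {Z I : Type*} {n m : ℕ} (F : I → I → I → Z → Fin n → ℤ) (W : I → Set Z)
    (φ : (Fin (m + 1) → I) → Z → Fin n → Fin n → ℤ) (lam : Fin (m + 5) → I) (z : Z)
    (hF : ∀ a b c d : I, z ∈ W a → z ∈ W b → z ∈ W c → z ∈ W d →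
      F b c d z - F a c d z + F a b d z - F a b c z = 0)
    (hz : ∀ i, z ∈ W (lam i)) :
    cechD (cup2 F φ) lam z =
      cup2 F (cechD φ) lam z + (-1) ^ m * cup1v F (cup1m F φ) lam z := by
  rw [cup1v_cup1m]
  unfold cup2
  rw [cechD_sum_lt]
  simp only [Finset.mul_sum, ← Finset.sum_add_distrib]
  refine Finset.sum_congr rfl fun i _ => Finset.sum_congr rfl fun j _ => ?_
  split_ifs with hij
  · refine (cechD_cup_three (fun a b c d z => CFc F a b c d z i j)
      (fun t z => φ t z i j) lam z).trans ?_
    rw [cech_CFc F z W hF (hz _) (hz _) (hz _) (hz _) (hz _), cechD_apply, cechD_apply]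
  · simp

/-- `D_F ∘ D_F = 0` for the dimensionally reduced Čech complex with
integer coefficients: for every degree `k = m+2 ≥ 2` and every cochain triple
`(φ0, φ1, φ2)`, all three components of `D_F (D_F (φ0,φ1,φ2))` vanish pointwise on the
relevant intersections of the open cover `W`, provided `F` is a Čech 2-cocycle on `W`. -/
theorem DF_squared_eq_zero [TopologicalSpace Z] (n : ℕ) (hn : 1 ≤ n)
    (W : I → Set Z) (hW : ∀ i, IsOpen (W i))
    (F : I → I → I → Z → Fin n → ℤ)
    (hF : ∀ l0 l1 l2 l3 : I, ∀ z : Z, z ∈ W l0 → z ∈ W l1 → z ∈ W l2 → z ∈ W l3 →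
      F l1 l2 l3 z - F l0 l2 l3 z + F l0 l1 l3 z - F l0 l1 l2 z = 0)
    (m : ℕ)
    (φ0 : (Fin (m + 3) → I) → Z → ℤ) (φ1 : (Fin (m + 2) → I) → Z → Fin n → ℤ)
    (φ2 : (Fin (m + 1) → I) → Z → Fin n → Fin n → ℤ) :
    (∀ lam : Fin (m + 5) → I, ∀ z : Z, (∀ i, z ∈ W (lam i)) →
      DF0 (m := m + 1) F (DF0 F φ0 φ1 φ2) (DF1 F φ1 φ2) (DF2 φ2) lam z = 0) ∧
    (∀ lam : Fin (m + 4) → I, ∀ z : Z, (∀ i, z ∈ W (lam i)) →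
      DF1 (m := m + 1) F (DF1 F φ1 φ2) (DF2 φ2) lam z = 0) ∧
    (∀ lam : Fin (m + 3) → I, ∀ z : Z, (∀ i, z ∈ W (lam i)) →
      DF2 (m := m + 1) (DF2 φ2) lam z = 0) := by
  refine ⟨fun lam z hz => ?_, fun lam z hz => ?_, fun lam z _ => cechD_cechD φ2 lam z⟩
  · have h1 : cechD (DF0 F φ0 φ1 φ2) lam z = (-1 : ℤ) ^ (m + 3) * cechD (cup1v F φ1) lam z +
        (-1 : ℤ) ^ (m + 3) * cechD (cup2 F φ2) lam z := by
      unfold DF0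
      rw [cechD_add, cechD_add, cechD_mul_left, cechD_mul_left, cechD_cechD, zero_add]
    have h2 : cup1v F (DF1 F φ1 φ2) lam z =
        cup1v F (cechD φ1) lam z + (-1 : ℤ) ^ (m + 2) * cup1v F (cup1m F φ2) lam z := by
      simp only [cup1v, DF1, Finset.mul_sum, ← Finset.sum_add_distrib]
      exact Finset.sum_congr rfl fun l _ => by ring
    rw [DF0, h1, h2, DF2, cechD_cup1v F φ1 lam z (hF _ _ _ _ z (hz _) (hz _) (hz _) (hz _)),
      cechD_cup2 F W φ2 lam z (fun a b c d => hF a b c d z) hz]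
    ring
  · funext l
    have h1 : cechD (DF1 F φ1 φ2) lam z l = (-1 : ℤ) ^ (m + 2) * cechD (cup1m F φ2) lam z l := by
      rw [cechD_apply, cechD_apply (cup1m F φ2)]
      simp only [DF1]
      rw [cechD_add, cechD_mul_left, ← cechD_apply (cechD φ1), cechD_cechD, Pi.zero_apply,
        zero_add]
    rw [DF1, h1, DF2, cechD_cup1m F φ2 lam z (hF _ _ _ _ z (hz _) (hz _) (hz _) (hz _)),
      Pi.zero_apply]
    ring
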